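/- arXiv:2209.10688 — 4 statements merged into one kernel-verified Lean document; each statement's English description precedes it below -/
import Mathlib

section
/- Let f : ℝ → ℝ be measurable, locally integrable, and of polynomial growth (there exist c_f > 0 and q > 0 with |f(s)| ≤ c_f(1+|s|^q) for all s > 0), let F(s) := ∫₀^s f(u) du, g(x) := f(exp x), and G(x) := F(1) + ∫₀^x g(v) dv. Then for every x ∈ ℝ one has G(x) = F(exp x)·exp(−x) + ∫₀^x F(exp v)·exp(−v) dv. -/
open MeasureTheory intervalIntegral Real

/-- For `f` measurable, locally integrable and of polynomial growth, with
`F s = ∫₀^s f`, `g x = f (exp x)`, `G x = F 1 + ∫₀^x g`, one has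
`G x = F (exp x) * exp (-x) + ∫₀^x F (exp v) * exp (-v) dv`. -/
theorem stmt_0
    (f : ℝ → ℝ) (hf_meas : Measurable f)
    (hf_loc : MeasureTheory.LocallyIntegrable f volume)
    (c_f q : ℝ) (hc : 0 < c_f) (hq : 0 < q)
    (hpg : ∀ s : ℝ, 0 < s → |f s| ≤ c_f * (1 + |s| ^ q))
    (F g G : ℝ → ℝ)
    (hF : ∀ s : ℝ, F s = ∫ u in (0:ℝ)..s, f u)
    (hg : ∀ x : ℝ, g x = f (Real.exp x))
    (hG : ∀ x : ℝ, G x = F 1 + ∫ v in (0:ℝ)..x, g v) :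
    ∀ x : ℝ,
      G x = F (Real.exp x) * Real.exp (-x)
        + ∫ v in (0:ℝ)..x, F (Real.exp v) * Real.exp (-v) := by
  intro x
  set h : ℝ → ℝ := fun t => (f ∘ Real.exp) t * Real.exp t with hh
  have hfi : ∀ a b : ℝ, IntervalIntegrable f volume a b := fun a b =>
    (hf_loc.integrableOn_isCompact isCompact_uIcc).intervalIntegrable
  have hhi : ∀ a b : ℝ, IntervalIntegrable h volume a b := fun a b =>
    (intervalIntegral.integrable_comp_mul_deriv_iff_of_deriv_nonneg
      (f := Real.exp) (f' := Real.exp) Real.continuous_exp.continuousOn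
      (fun y _ => Real.hasDerivAt_exp y) (fun y _ => (Real.exp_pos y).le)).2 (hfi _ _)
  have hK : ∀ v : ℝ, ∫ t in (0:ℝ)..v, h t = F (Real.exp v) - F 1 := by
    intro v
    have h1 := intervalIntegral.integral_comp_mul_deriv_of_deriv_nonneg (a := 0) (b := v)
      (f := Real.exp) (f' := Real.exp) (g := f) Real.continuous_exp.continuousOn
      (fun y _ => Real.hasDerivAt_exp y) (fun y _ => (Real.exp_pos y).le)
    rw [hh, h1, hF, hF, Real.exp_zero, intervalIntegral.integral_interval_sub_left (hfi _ _) (hfi _ _)]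
  have hKac : AbsolutelyContinuousOnInterval (fun v => ∫ t in (0:ℝ)..v, h t) 0 x :=
    (hhi 0 x).absolutelyContinuousOnInterval_intervalIntegral (by simp)
  have hEac : AbsolutelyContinuousOnInterval (fun v : ℝ => Real.exp (-v)) 0 x := by
    apply ContDiffOn.absolutelyContinuousOnInterval
    exact (Real.contDiff_exp.comp contDiff_neg).contDiffOn
  have hE : ∀ v : ℝ, HasDerivAt (fun v : ℝ => Real.exp (-v)) (-Real.exp (-v)) v := by
    intro v
    simpa using (hasDerivAt_neg v).exp
  have ibp := hKac.integral_mul_deriv_eq_deriv_mul hEac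
  have e1 : ∫ v in (0:ℝ)..x, deriv (fun v => ∫ t in (0:ℝ)..v, h t) v * Real.exp (-v)
      = ∫ v in (0:ℝ)..x, g v := by
    apply intervalIntegral.integral_congr_ae
    filter_upwards [(hhi 0 x).ae_hasDerivAt_integral] with v hv hvm
    rw [(hv (Set.uIoc_subset_uIcc hvm) 0 (by simp)).deriv, hg, hh]
    simp [mul_assoc, ← Real.exp_add]
  rw [e1] at ibp
  simp only [(hE _).deriv, hK] at ibp
  have hci : IntervalIntegrable (fun v => F 1 * Real.exp (-v)) volume 0 x :=
    Continuous.intervalIntegrable (by fun_prop) _ _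
  have hFc : Continuous fun v => F (Real.exp v) * Real.exp (-v) := by
    have : Continuous F := by
      have hFe : F = fun s => ∫ u in (0:ℝ)..s, f u := funext hF
      rw [hFe]
      exact intervalIntegral.continuous_primitive hfi 0
    fun_prop
  have e2 : ∫ v in (0:ℝ)..x, (F (Real.exp v) - F 1) * -Real.exp (-v)
      = F 1 * (1 - Real.exp (-x)) - ∫ v in (0:ℝ)..x, F (Real.exp v) * Real.exp (-v) := by
    have e3 : ∫ v in (0:ℝ)..x, F 1 * Real.exp (-v) = F 1 * (1 - Real.exp (-x)) := by
      rw [intervalIntegral.integral_const_mul]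
      simp
    rw [← e3, ← intervalIntegral.integral_sub hci (hFc.intervalIntegrable _ _)]
    congr 1
    ext v
    ring
  rw [e2] at ibp
  simp only [Real.exp_zero] at ibp
  rw [hG]
  linarith
end

section
/- Let f : ℝ → ℝ be measurable, locally integrable, and of polynomial growth (there exist c_f > 0 and q > 0 with |f(s)| ≤ c_f(1+|s|^q) for all s > 0), let F(s) := ∫₀^s f(u) du, let d ≥ 1, α₁, …, α_d > 0, and define G₁(x₁,…,x_d) := F(∑_{i=1}^d αᵢ exp(xᵢ)) / (α₁ exp(x₁)). Then for all x, x' ∈ ℝ^d with ∑_{i=1}^d αᵢ exp(xᵢ) > ∑_{i=1}^d αᵢ exp(xᵢ'), one has |G₁(x) − G₁(x')| ≤ c_f (exp(−x₁)/α₁)(1 + (∑_{i=1}^d αᵢ exp(xᵢ))^q) ∑_{j=1}^d α_j exp(max(x_j, x_j')) |x_j − x_j'| + (c_f/α₁)(∑_{i=1}^d αᵢ exp(xᵢ') + (1/(q+1))(∑_{i=1}^d αᵢ exp(xᵢ'))^{q+1}) exp(−min(x₁, x₁')) |x₁ − x₁'|. -/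
open MeasureTheory intervalIntegral Real Finset

theorem aux_exp (a b : ℝ) : |Real.exp a - Real.exp b| ≤ Real.exp (max a b) * |a - b| := by
  have key : ∀ a b : ℝ, b ≤ a → |Real.exp a - Real.exp b| ≤ Real.exp (max a b) * |a - b| := by
    intro a b h
    rw [max_eq_left h, abs_of_nonneg (sub_nonneg.2 (Real.exp_le_exp.2 h)),
      abs_of_nonneg (sub_nonneg.2 h)]
    have h1 := Real.add_one_le_exp (b - a)
    have h2 : Real.exp b = Real.exp a * Real.exp (b - a) := by
      rw [← Real.exp_add]; congr 1; ring
    rw [h2]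
    nlinarith [Real.exp_pos a]
  rcases le_total b a with h | h
  · exact key a b h
  · rw [abs_sub_comm, max_comm, abs_sub_comm a b]
    exact key b a h

/-- Local Lipschitz estimate for the basket functional
`G₁ x = F (∑ i, αᵢ exp (xᵢ)) / (α₁ exp (x₁))`. -/
theorem stmt_3
    (f : ℝ → ℝ) (hf_meas : Measurable f)
    (hf_loc : MeasureTheory.LocallyIntegrable f volume)
    (c_f q : ℝ) (hc : 0 < c_f) (hq : 0 < q)
    (hpg : ∀ s : ℝ, 0 < s → |f s| ≤ c_f * (1 + |s| ^ q))
    (F : ℝ → ℝ)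
    (hF : ∀ s : ℝ, F s = ∫ u in (0:ℝ)..s, f u)
    (d : ℕ) (hd : 1 ≤ d)
    (α : Fin d → ℝ) (hα : ∀ i, 0 < α i)
    (G₁ : (Fin d → ℝ) → ℝ)
    (hG₁ : ∀ x : Fin d → ℝ,
      G₁ x = F (∑ i, α i * Real.exp (x i)) / (α ⟨0, hd⟩ * Real.exp (x ⟨0, hd⟩))) :
    ∀ x x' : Fin d → ℝ,
      (∑ i, α i * Real.exp (x' i)) < (∑ i, α i * Real.exp (x i)) →
      |G₁ x - G₁ x'|
        ≤ c_f * (Real.exp (-(x ⟨0, hd⟩)) / α ⟨0, hd⟩)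
            * (1 + (∑ i, α i * Real.exp (x i)) ^ q)
            * (∑ j, α j * Real.exp (max (x j) (x' j)) * |x j - x' j|)
          + (c_f / α ⟨0, hd⟩)
            * ((∑ i, α i * Real.exp (x' i))
                + (1 / (q + 1)) * (∑ i, α i * Real.exp (x' i)) ^ (q + 1))
            * Real.exp (-(min (x ⟨0, hd⟩) (x' ⟨0, hd⟩)))
            * |x ⟨0, hd⟩ - x' ⟨0, hd⟩| := by
  intro x x' hlt
  set z : Fin d := ⟨0, hd⟩ with hz
  set S := ∑ i, α i * Real.exp (x i) with hS
  set T := ∑ i, α i * Real.exp (x' i) with hT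
  have hT0 : 0 ≤ T := Finset.sum_nonneg fun i _ => (mul_pos (hα i) (Real.exp_pos _)).le
  have hS0 : 0 ≤ S := hT0.trans hlt.le
  have hint : ∀ a b : ℝ, IntervalIntegrable f volume a b := fun a b =>
    (hf_loc.integrableOn_isCompact isCompact_uIcc).intervalIntegrable
  have h1 : |F S - F T| ≤ c_f * (1 + S ^ q) * (S - T) := by
    rw [hF, hF, intervalIntegral.integral_interval_sub_left (hint _ _) (hint _ _)]
    have := intervalIntegral.norm_integral_le_of_norm_le_const (f := f) (a := T) (b := S)
      (C := c_f * (1 + S ^ q)) (by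
        intro u hu
        rw [Set.uIoc_of_le hlt.le] at hu
        have hu0 : 0 < u := hT0.trans_lt hu.1
        refine (hpg u hu0).trans ?_
        rw [abs_of_pos hu0]
        have := Real.rpow_le_rpow hu0.le hu.2 hq.le
        gcongr)
    rwa [Real.norm_eq_abs, abs_of_pos (sub_pos.2 hlt)] at this
  have h2 : |F T| ≤ c_f * (T + (1 / (q + 1)) * T ^ (q + 1)) := by
    rw [hF]
    have hi : IntervalIntegrable (fun u : ℝ => u ^ q) volume 0 T :=
      intervalIntegral.intervalIntegrable_rpow' (by linarith)
    have := intervalIntegral.norm_integral_le_of_norm_le (f := f) (a := 0) (b := T) (μ := volume)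
      (g := fun u => c_f * (1 + u ^ q)) hT0 (by
        refine Filter.Eventually.of_forall fun u hu => ?_
        have := hpg u hu.1
        rwa [abs_of_pos hu.1] at this) ((intervalIntegrable_const.add hi).const_mul _)
    rw [intervalIntegral.integral_const_mul,
      intervalIntegral.integral_add intervalIntegrable_const hi,
      integral_rpow (Or.inl (by linarith))] at this
    rw [Real.zero_rpow (by linarith)] at this
    simp only [intervalIntegral.integral_const, smul_eq_mul] at this
    rw [Real.norm_eq_abs] at this
    refine this.trans (le_of_eq ?_)
    ring
  have h3 : S - T ≤ ∑ j, α j * Real.exp (max (x j) (x' j)) * |x j - x' j| := by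
    rw [hS, hT, ← Finset.sum_sub_distrib]
    refine Finset.sum_le_sum fun j _ => ?_
    rw [← mul_sub, mul_assoc]
    exact mul_le_mul_of_nonneg_left ((le_abs_self _).trans (aux_exp _ _)) (hα j).le
  have h4 : |Real.exp (-(x z)) - Real.exp (-(x' z))|
      ≤ Real.exp (-(min (x z) (x' z))) * |x z - x' z| := by
    have := aux_exp (-(x z)) (-(x' z))
    rwa [max_neg_neg, neg_sub_neg, abs_sub_comm (x' z)] at this
  have ha := hα z
  have hSq : 0 ≤ S ^ q := Real.rpow_nonneg hS0 q
  have hTq : 0 ≤ T ^ (q + 1) := Real.rpow_nonneg hT0 _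
  have h5 : G₁ x - G₁ x' = (F S - F T) * (Real.exp (-(x z)) / α z)
      + F T / α z * (Real.exp (-(x z)) - Real.exp (-(x' z))) := by
    rw [hG₁, hG₁, Real.exp_neg, Real.exp_neg, ← hS, ← hT]
    field_simp
    ring
  rw [h5]
  refine (abs_add_le _ _).trans (add_le_add ?_ ?_)
  · rw [abs_mul, abs_of_pos (div_pos (Real.exp_pos _) ha)]
    calc _ ≤ (c_f * (1 + S ^ q) * (S - T)) * (Real.exp (-(x z)) / α z) := by gcongr
      _ ≤ (c_f * (1 + S ^ q) * (∑ j, α j * Real.exp (max (x j) (x' j)) * |x j - x' j|))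
          * (Real.exp (-(x z)) / α z) := by gcongr
      _ = _ := by ring
  · rw [abs_mul, abs_div, abs_of_pos ha]
    calc _ ≤ (c_f * (T + (1 / (q + 1)) * T ^ (q + 1))) / α z
          * (Real.exp (-(min (x z) (x' z))) * |x z - x' z|) := by gcongr
      _ = _ := by ring
end

section
/- Let k ≥ 1, let φ : ℝ → ℝ be infinitely differentiable with compact support, φ(x) = x whenever |x| ≤ 1, and |φ(x)| ≤ |x| for all x ∈ ℝ. Let f : ℝ^k → ℝ be continuously differentiable and fix j ∈ {1,…,k}. Assume that either ∂f/∂x_j is bounded on ℝ^k, or there exist sequences (r_n)_{n≥1} and (s_n)_{n≥1} with r_n → ∞ and s_n → ∞ such that, for all n and all x ∈ ℝ^k, |∂f/∂x_j(x)| ≥ s_n implies |f(x)| ≥ r_n. Then for every m ≥ 1 the function f_m(x) := m·φ(f(x)/m) is continuously differentiable and its partial derivative ∂f_m/∂x_j is bounded on ℝ^k. -/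
open Filter Real

/-- For a smooth compactly supported `φ` with `φ x = x` on `|x| ≤ 1` and
`|φ x| ≤ |x|`, and a `C¹` function `f : ℝ^k → ℝ` whose `j`-th partial derivative is either
bounded or compressible (large partial derivative forces large `|f|` along suitable
sequences), the compression `fₘ x = m φ (f x / m)` is `C¹` with bounded `j`-th partial
derivative, for every `m ≥ 1`. -/
theorem stmt_6
    (k : ℕ) (hk : 1 ≤ k)
    (φ : ℝ → ℝ) (hφ_smooth : ContDiff ℝ (⊤ : ℕ∞) φ) (hφ_supp : HasCompactSupport φ)
    (hφ_id : ∀ x : ℝ, |x| ≤ 1 → φ x = x)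
    (hφ_le : ∀ x : ℝ, |φ x| ≤ |x|)
    (f : (Fin k → ℝ) → ℝ) (hf : ContDiff ℝ 1 f)
    (j : Fin k)
    (hyp : (∃ C : ℝ, ∀ x : Fin k → ℝ, |fderiv ℝ f x (Pi.single j 1)| ≤ C)
        ∨ (∃ r s : ℕ → ℝ,
            Tendsto r atTop atTop ∧ Tendsto s atTop atTop ∧
            ∀ (n : ℕ) (x : Fin k → ℝ),
              s n ≤ |fderiv ℝ f x (Pi.single j 1)| → r n ≤ |f x|)) :
    ∀ m : ℕ, 1 ≤ m →
      ContDiff ℝ 1 (fun x : Fin k → ℝ => (m : ℝ) * φ (f x / (m : ℝ)))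
        ∧ ∃ C : ℝ, ∀ x : Fin k → ℝ,
            |fderiv ℝ (fun x : Fin k → ℝ => (m : ℝ) * φ (f x / (m : ℝ))) x
              (Pi.single j 1)| ≤ C := by
  intro m hm
  have hm0 : (0 : ℝ) < m := by exact_mod_cast hm
  have hφ1 : ContDiff ℝ 1 φ := hφ_smooth.of_le (by exact_mod_cast le_top)
  refine ⟨contDiff_const.mul (hφ1.comp (hf.div_const _)), ?_⟩
  have hd : ∀ x : Fin k → ℝ,
      fderiv ℝ (fun x : Fin k → ℝ => (m : ℝ) * φ (f x / (m : ℝ))) x (Pi.single j 1)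
        = deriv φ (f x / m) * fderiv ℝ f x (Pi.single j 1) := by
    intro x
    have h1 : HasFDerivAt f (fderiv ℝ f x) x :=
      (hf.differentiable (by norm_num) x).hasFDerivAt
    have h2 : HasFDerivAt (fun y => f y / (m : ℝ)) ((m : ℝ)⁻¹ • fderiv ℝ f x) x := by
      simpa only [div_eq_mul_inv] using h1.mul_const (m : ℝ)⁻¹
    have h3 : HasDerivAt φ (deriv φ (f x / m)) (f x / m) :=
      (hφ1.differentiable (by norm_num) _).hasDerivAt
    have h4 := (h3.comp_hasFDerivAt x h2).const_mul (m : ℝ)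
    have h5 : HasFDerivAt (fun x : Fin k → ℝ => (m : ℝ) * φ (f x / (m : ℝ))) _ x := h4
    rw [h5.fderiv]
    simp only [ContinuousLinearMap.smul_apply, smul_eq_mul]
    field_simp
  have hdc : Continuous (deriv φ) := hφ1.continuous_deriv le_rfl
  obtain ⟨K, hK⟩ := hdc.bounded_above_of_compact_support hφ_supp.deriv
  have hK0 : 0 ≤ K := (norm_nonneg _).trans (hK 0)
  obtain ⟨R, hR⟩ := hφ_supp.deriv.isCompact.isBounded.exists_norm_le
  have hz : ∀ y : ℝ, R < |y| → deriv φ y = 0 := by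
    intro y hy
    by_contra h
    have := hR y (subset_tsupport _ h)
    rw [Real.norm_eq_abs] at this
    linarith
  simp only [hd, abs_mul]
  rcases hyp with ⟨C, hC⟩ | ⟨r, s, hr, -, hrs⟩
  · exact ⟨K * C, fun x => mul_le_mul (hK _) (hC x) (abs_nonneg _) hK0⟩
  · obtain ⟨n, hn⟩ := (hr.eventually_gt_atTop (R * m)).exists
    refine ⟨K * |s n|, fun x => ?_⟩
    by_cases hx : s n ≤ |fderiv ℝ f x (Pi.single j 1)|
    · have h0 : deriv φ (f x / m) = 0 := by
        apply hz
        rw [abs_div, abs_of_pos hm0, lt_div_iff₀ hm0]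
        exact hn.trans_le (hrs n x hx)
      rw [h0]
      simp only [abs_zero, zero_mul]
      positivity
    · exact mul_le_mul (hK _) ((not_le.mp hx).le.trans (le_abs_self _)) (abs_nonneg _) hK0
end

section
/- Let φ < ψ be real numbers, let c > 0, c' > 0, γ > 0 and y* ∈ (0, (ψ−φ)/2), and let b : (φ, ψ) → ℝ be continuously differentiable with b'(y) < c for all y ∈ (φ, ψ), b(y) ≥ c'/(y − φ)^γ for all y ∈ (φ, φ + y*], and b(y) ≤ −c'/(ψ − y)^γ for all y ∈ [ψ − y*, ψ). Then for every Δ with 0 < Δ < 1/c, the map β(y) := y − Δ·b(y) is strictly increasing on (φ, ψ), satisfies β'(y) > 1 − Δc > 0 for all y ∈ (φ, ψ), and is a bijection from (φ, ψ) onto ℝ. In particular, for every z ∈ ℝ there is a unique y ∈ (φ, ψ) with y − Δ·b(y) = z. -/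
open Real Set

/-- The singular bound takes arbitrarily large values near zero. -/
theorem exists_blowup (c' γ ystar M : ℝ) (hc' : 0 < c') (hγ : 0 < γ) (hy : 0 < ystar) :
    ∃ δ : ℝ, 0 < δ ∧ δ ≤ ystar ∧ M ≤ c' / δ ^ γ := by
  have hM : 0 < max M 1 := lt_of_lt_of_le one_pos (le_max_right _ _)
  have hq : 0 < c' / max M 1 := div_pos hc' hM
  have hp : 0 < (c' / max M 1) ^ (1 / γ) := Real.rpow_pos_of_pos hq _
  have hδ : 0 < min ystar ((c' / max M 1) ^ (1 / γ)) := lt_min hy hp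
  refine ⟨_, hδ, min_le_left _ _, (le_max_left M 1).trans ?_⟩
  have h1 := Real.rpow_le_rpow hδ.le
    (min_le_right ystar ((c' / max M 1) ^ (1 / γ))) hγ.le
  rw [← Real.rpow_mul hq.le, one_div_mul_cancel hγ.ne', Real.rpow_one] at h1
  rw [le_div_iff₀ (Real.rpow_pos_of_pos hδ _)]
  rw [le_div_iff₀ hM] at h1
  linarith

/-- Under the sandwiched-drift assumptions (derivative bounded above by `c`,
blow-up of order `γ` near the bounds `φ < ψ`), for any step `Δ ∈ (0, 1/c)` the map
`β(y) = y - Δ b(y)` is strictly increasing on `(φ, ψ)`, has derivative `1 - Δ b'(y) >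
1 - Δ c > 0`, and is a bijection from `(φ, ψ)` onto `ℝ`; in particular the drift-implicit
Euler step has a unique solution. -/
theorem stmt_10
    (φ ψ c c' γ ystar : ℝ)
    (hφψ : φ < ψ) (hc : 0 < c) (hc' : 0 < c') (hγ : 0 < γ)
    (hystar : ystar ∈ Set.Ioo 0 ((ψ - φ) / 2))
    (b b' : ℝ → ℝ)
    (hderiv : ∀ y ∈ Set.Ioo φ ψ, HasDerivAt b (b' y) y)
    (hb'_cont : ContinuousOn b' (Set.Ioo φ ψ))
    (hb'_lt : ∀ y ∈ Set.Ioo φ ψ, b' y < c)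
    (hlow : ∀ y : ℝ, φ < y → y ≤ φ + ystar → c' / (y - φ) ^ γ ≤ b y)
    (hupp : ∀ y : ℝ, ψ - ystar ≤ y → y < ψ → b y ≤ -(c' / (ψ - y) ^ γ)) :
    ∀ Δ : ℝ, 0 < Δ → Δ < 1 / c →
      StrictMonoOn (fun y => y - Δ * b y) (Set.Ioo φ ψ)
        ∧ (0 < 1 - Δ * c)
        ∧ (∀ y ∈ Set.Ioo φ ψ,
            HasDerivAt (fun y => y - Δ * b y) (1 - Δ * b' y) y
              ∧ 1 - Δ * c < 1 - Δ * b' y)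
        ∧ Set.BijOn (fun y => y - Δ * b y) (Set.Ioo φ ψ) Set.univ
        ∧ (∀ z : ℝ, ∃! y : ℝ, y ∈ Set.Ioo φ ψ ∧ y - Δ * b y = z) := by
  intro Δ hΔ hΔc
  obtain ⟨hy0, hy1⟩ := hystar
  have hpos : 0 < 1 - Δ * c := by
    rw [lt_div_iff₀ hc] at hΔc
    linarith
  have hD : ∀ y ∈ Set.Ioo φ ψ,
      HasDerivAt (fun y => y - Δ * b y) (1 - Δ * b' y) y
        ∧ 1 - Δ * c < 1 - Δ * b' y := by
    intro y hy
    refine ⟨(hasDerivAt_id y).sub ((hderiv y hy).const_mul Δ), ?_⟩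
    have := mul_lt_mul_of_pos_left (hb'_lt y hy) hΔ
    linarith
  have hcont : ContinuousOn (fun y => y - Δ * b y) (Set.Ioo φ ψ) :=
    fun y hy => (hD y hy).1.continuousAt.continuousWithinAt
  have hmono : StrictMonoOn (fun y => y - Δ * b y) (Set.Ioo φ ψ) := by
    apply strictMonoOn_of_deriv_pos (convex_Ioo φ ψ) hcont
    intro y hy
    rw [interior_Ioo] at hy
    rw [(hD y hy).1.deriv]
    exact hpos.trans (hD y hy).2
  have hsurj : ∀ z : ℝ, ∃ y ∈ Set.Ioo φ ψ, y - Δ * b y = z := by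
    intro z
    obtain ⟨d, hd0, hd1, hd2⟩ := exists_blowup c' γ ystar ((ψ - z) / Δ) hc' hγ hy0
    obtain ⟨e, he0, he1, he2⟩ := exists_blowup c' γ ystar ((z - φ) / Δ) hc' hγ hy0
    have hl := hlow (φ + d) (by linarith) (by linarith)
    have hu := hupp (ψ - e) (by linarith) (by linarith)
    rw [add_sub_cancel_left] at hl
    rw [sub_sub_cancel] at hu
    have h1 := (div_le_iff₀ hΔ).1 (hd2.trans hl)
    have h2 := (div_le_iff₀ hΔ).1 (he2.trans (le_neg.1 hu))
    have hsub : Set.Icc (φ + d) (ψ - e) ⊆ Set.Ioo φ ψ := fun x hx =>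
      ⟨by linarith [hx.1], by linarith [hx.2]⟩
    have hz := intermediate_value_Icc (by linarith : φ + d ≤ ψ - e) (hcont.mono hsub)
    obtain ⟨y, hy, hyz⟩ := hz (show z ∈ Set.Icc _ _ from
      ⟨by linarith, by linarith⟩)
    exact ⟨y, hsub hy, hyz⟩
  refine ⟨hmono, hpos, hD, ⟨fun _ _ => Set.mem_univ _, hmono.injOn, ?_⟩, ?_⟩
  · intro z _
    obtain ⟨y, hy, hyz⟩ := hsurj z
    exact ⟨y, hy, hyz⟩
  · intro z
    obtain ⟨y, hy, hyz⟩ := hsurj z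
    refine ⟨y, ⟨hy, hyz⟩, ?_⟩
    rintro x ⟨hx, hxz⟩
    exact hmono.injOn hx hy (hxz.trans hyz.symm)
end
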